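/- Let f : [ω₂]² → [ω₂]^{≤ω} satisfy f{α,β} ⊆ α ∩ β for all pairs, let p = (a,h,i) and p' = (a',h',i') be good twins in P_f, and for η ∈ ⋃{h(δ) : δ ∈ a ∩ a'} ∪ ⋃{h'(δ) : δ ∈ a ∩ a'} let δ_η = min{δ ∈ a ∩ a' : η ∈ h(δ) ∪ h'(δ)}. Then for every η ∈ a and every δ ∈ a ∩ a': η ∈ h(δ) if and only if δ_η is defined and δ_η ∈ h(δ). -/

import Mathlib

attribute [local instance] Classical.propDecidable

noncomputable section

/-- The second uncountable cardinal ω₂, as an ordinal. -/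
def omega2 : Ordinal := (Cardinal.aleph 2).ord

/-- The operation `x * y` on nonempty finite sets of ordinals with `max x ≠ max y`:
`x \ y` if `max x ∈ y`, `y \ x` if `max y ∈ x`, and `x ∩ y` otherwise. -/
def ostar (x y : Finset Ordinal) : Finset Ordinal :=
  if ∃ m ∈ y, x.max = (m : WithBot Ordinal) then x \ y
  else if ∃ m ∈ x, y.max = (m : WithBot Ordinal) then y \ x
  else x ∩ y

/-- The conditions of the poset `P_f`: triples `(a, h, i)` where `a` is a finite
subset of ω₂, `h : a → 𝒫(a)` with `max (h ξ) = ξ`, `i : [a]² → 𝒫(a)` with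
`i {ξ,η} ⊆ f {ξ,η}`, and `h ξ * h η ⊆ ⋃ {h ν : ν ∈ i {ξ,η}}`. -/
structure PfCond (f : Ordinal → Ordinal → Set Ordinal) where
  a : Finset Ordinal
  h : Ordinal → Finset Ordinal
  i : Ordinal → Ordinal → Finset Ordinal
  a_lt : ∀ ξ ∈ a, ξ < omega2
  h_sub : ∀ ξ ∈ a, h ξ ⊆ a
  h_mem : ∀ ξ ∈ a, ξ ∈ h ξ
  h_le : ∀ ξ ∈ a, ∀ η ∈ h ξ, η ≤ ξ
  i_symm : ∀ ξ η, i ξ η = i η ξ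
  i_sub_f : ∀ ξ ∈ a, ∀ η ∈ a, ξ ≠ η → ∀ ν ∈ i ξ η, ν ∈ f ξ η
  i_sub_a : ∀ ξ ∈ a, ∀ η ∈ a, ξ ≠ η → i ξ η ⊆ a
  star_cond : ∀ ξ ∈ a, ∀ η ∈ a, ξ ≠ η → ostar (h ξ) (h η) ⊆ (i ξ η).biUnion h

/-- The order on `P_f`: `p ≤ q` iff `a^p ⊇ a^q`, `h^p(ξ) ∩ a^q = h^q(ξ)` for
`ξ ∈ a^q`, and `i^p` extends `i^q`. -/
def PfLe {f : Ordinal → Ordinal → Set Ordinal} (p q : PfCond f) : Prop :=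
  q.a ⊆ p.a ∧ (∀ ξ ∈ q.a, p.h ξ ∩ q.a = q.h ξ) ∧
    ∀ ξ ∈ q.a, ∀ η ∈ q.a, ξ ≠ η → p.i ξ η = q.i ξ η

/-- Two finite subsets `x` and `y` of ω₂ are good for `f`. -/
def GoodFor (f : Ordinal → Ordinal → Set Ordinal) (x y : Finset Ordinal) : Prop :=
  ∀ α ∈ x ∩ y, ∀ β ∈ x \ y, ∀ γ ∈ y \ x,
    ((α < β ∧ α < γ) → α ∈ f β γ) ∧
    (α < β → f α γ ⊆ f β γ) ∧
    (α < γ → f α β ⊆ f γ β)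

/-- `p` and `p'` are good twins: the natural order preserving bijection between
`a^p` and `a^{p'}` is an isomorphism of the conditions fixing `a^p ∩ a^{p'}`,
`i` and `i'` agree on pairs from `a^p ∩ a^{p'}`, and `a^p`, `a^{p'}` are good
for `f`. -/
def GoodTwins {f : Ordinal → Ordinal → Set Ordinal} (p p' : PfCond f) : Prop :=
  (∃ e : Ordinal → Ordinal,
    Set.BijOn e ↑p.a ↑p'.a ∧
    (∀ ξ ∈ p.a, ∀ η ∈ p.a, ξ < η → e ξ < e η) ∧
    (∀ ξ ∈ p.a ∩ p'.a, e ξ = ξ) ∧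
    (∀ ξ ∈ p.a, p'.h (e ξ) = (p.h ξ).image e) ∧
    (∀ ξ ∈ p.a, ∀ η ∈ p.a, ξ ≠ η → p'.i (e ξ) (e η) = (p.i ξ η).image e)) ∧
  (∀ ξ ∈ p.a ∩ p'.a, ∀ η ∈ p.a ∩ p'.a, ξ ≠ η → p.i ξ η = p'.i ξ η) ∧
  GoodFor f p.a p'.a

/-- `δ` is the ordinal `δ_η = min {δ ∈ a^p ∩ a^{p'} : η ∈ h^p(δ) ∪ h^{p'}(δ)}`. -/
def DeltaIs {f : Ordinal → Ordinal → Set Ordinal} (p p' : PfCond f)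
    (η δ : Ordinal) : Prop :=
  δ ∈ p.a ∩ p'.a ∧ η ∈ p.h δ ∪ p'.h δ ∧
    ∀ δ' ∈ p.a ∩ p'.a, η ∈ p.h δ' ∪ p'.h δ' → δ ≤ δ'

/-- The maximum of `h ξ` is `ξ`. -/
theorem PfCond.max_h {f : Ordinal → Ordinal → Set Ordinal} (p : PfCond f) {ξ : Ordinal}
    (hξ : ξ ∈ p.a) : (p.h ξ).max = (ξ : WithBot Ordinal) :=
  le_antisymm (Finset.max_le fun η hη => WithBot.coe_le_coe.2 (p.h_le ξ hξ η hη))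
    (Finset.le_max (p.h_mem ξ hξ))

/-- If `η ∈ h d` with `d < δ`, and membership of `η` in `h δ` differs from that of `d`,
then `η` is covered by `h ν` for some `ν ∈ i {d,δ}`. -/
theorem PfCond.exists_mem_i {f : Ordinal → Ordinal → Set Ordinal} (p : PfCond f)
    {η d δ : Ordinal} (hd : d ∈ p.a) (hδ : δ ∈ p.a) (hdδ : d < δ) (hη : η ∈ p.h d)
    (hne : ¬(η ∈ p.h δ ↔ d ∈ p.h δ)) : ∃ ν ∈ p.i d δ, η ∈ p.h ν := by
  have hδd : δ ∉ p.h d := fun h => (p.h_le d hd δ h).not_gt hdδ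
  have hmem : η ∈ ostar (p.h d) (p.h δ) := by
    simp only [ostar, p.max_h hd, p.max_h hδ, WithBot.coe_inj, exists_eq_right', hδd, if_false]
    split_ifs with hdh
    · exact Finset.mem_sdiff.2 ⟨hη, fun h => hne ⟨fun _ => hdh, fun _ => h⟩⟩
    · exact Finset.mem_inter.2 ⟨hη, by tauto⟩
  simpa using p.star_cond d hd δ hδ hdδ.ne hmem

/-- For `η ∈ a` and `δ ∈ a ∩ a'`, membership in `h' δ` already implies membership in `h δ`. -/
theorem GoodTwins.mem_h_of_mem_h {f : Ordinal → Ordinal → Set Ordinal} {p p' : PfCond f}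
    (htw : GoodTwins p p') {η δ : Ordinal} (hη : η ∈ p.a) (hδ : δ ∈ p.a ∩ p'.a)
    (h : η ∈ p'.h δ) : η ∈ p.h δ := by
  obtain ⟨⟨e, hbij, -, hfix, hh, -⟩, -, -⟩ := htw
  obtain ⟨hδa, hδa'⟩ := Finset.mem_inter.1 hδ
  have heη : e η = η := hfix η (Finset.mem_inter.2 ⟨hη, p'.h_sub δ hδa' h⟩)
  have himage := hh δ hδa
  rw [hfix δ hδ] at himage
  rw [himage] at h
  obtain ⟨ζ, hζ, heζ⟩ := Finset.mem_image.1 h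
  rwa [← hbij.injOn (p.h_sub δ hδa hζ) hη (heζ.trans heη.symm)]

theorem stmt12
    (f : Ordinal → Ordinal → Set Ordinal)
    (hsymm : ∀ α β, f α β = f β α)
    (hlt : ∀ α β γ, γ ∈ f α β → γ < α ∧ γ < β)
    (hcount : ∀ α β, (f α β).Countable)
    (p p' : PfCond f) (htw : GoodTwins p p')
    (η : Ordinal) (hη : η ∈ p.a) (δ : Ordinal) (hδ : δ ∈ p.a ∩ p'.a) :
    η ∈ p.h δ ↔ ∃ d, DeltaIs p p' η d ∧ d ∈ p.h δ := by
  obtain ⟨hδa, hδa'⟩ := Finset.mem_inter.1 hδ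
  have key : ∀ d, DeltaIs p p' η d → d ≤ δ → (η ∈ p.h δ ↔ d ∈ p.h δ) := by
    rintro d ⟨hd, hηd, hmin⟩ hle
    obtain ⟨hda, hda'⟩ := Finset.mem_inter.1 hd
    have hηd : η ∈ p.h d := (Finset.mem_union.1 hηd).elim id (htw.mem_h_of_mem_h hη hd)
    rcases hle.eq_or_lt with rfl | hdδ
    · exact iff_of_true hηd (p.h_mem d hda)
    by_contra hne
    obtain ⟨ν, hν, hην⟩ := p.exists_mem_i hda hδa hdδ hηd hne
    have hν' : ν ∈ p'.i d δ := htw.2.1 d hd δ hδ hdδ.ne ▸ hν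
    have hνD : ν ∈ p.a ∩ p'.a := Finset.mem_inter.2
      ⟨p.i_sub_a d hda δ hδa hdδ.ne hν, p'.i_sub_a d hda' δ hδa' hdδ.ne hν'⟩
    exact (hmin ν hνD (Finset.mem_union_left _ hην)).not_gt
      (hlt d δ ν (p.i_sub_f d hda δ hδa hdδ.ne ν hν)).1
  constructor
  · intro h
    let S := (p.a ∩ p'.a).filter fun ξ => η ∈ p.h ξ ∪ p'.h ξ
    have hδS : δ ∈ S := Finset.mem_filter.2 ⟨hδ, Finset.mem_union_left _ h⟩
    obtain ⟨d, hdS, hmin⟩ := S.exists_min_image id ⟨δ, hδS⟩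
    obtain ⟨hd, hηd⟩ := Finset.mem_filter.1 hdS
    have hD : DeltaIs p p' η d :=
      ⟨hd, hηd, fun ξ hξ hηξ => hmin ξ (Finset.mem_filter.2 ⟨hξ, hηξ⟩)⟩
    exact ⟨d, hD, (key d hD (hmin δ hδS)).1 h⟩
  · rintro ⟨d, hD, hdδ⟩
    exact (key d hD (p.h_le δ hδa d hdδ)).2 hdδ
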